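/- Let n ≥ 1, q ∈ [1,∞), and α ≥ 0. The weak Zygmund type space 𝔏^{q,∞}(log 𝔏)^α on ℝ^n is complete: if (f_k) is a sequence of locally integrable functions with ‖f_k‖_{𝔏^{q,∞}(log 𝔏)^α} < ∞ for all k which is Cauchy with respect to the norm ‖·‖_{𝔏^{q,∞}(log 𝔏)^α}, then there exists a locally integrable f with ‖f‖_{𝔏^{q,∞}(log 𝔏)^α} < ∞ such that ‖f_k − f‖_{𝔏^{q,∞}(log 𝔏)^α} → 0 as k → ∞. -/

import Mathlib

open MeasureTheory Real Set ENNReal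

noncomputable def logFac (s : ℝ) : ℝ := Real.log (Real.exp 1 + 1 / s)

noncomputable def zygNorm (n : ℕ) (q α : ℝ)
    (f : EuclideanSpace ℝ (Fin n) → ℝ) : ℝ≥0∞ :=
  ⨆ s : Set.Ioi (0 : ℝ),
    (ENNReal.ofReal (logFac s.1) ^ α *
      ⨆ E : {E : Set (EuclideanSpace ℝ (Fin n)) //
          MeasurableSet E ∧ volume E = ENNReal.ofReal s.1},
        ∫⁻ x in E.1, ENNReal.ofReal (|f x| ^ q)) ^ (1 / q)

/-!
The weight can be absorbed into the measure: for `|E| = s`, the quantity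
`([log (e + 1/s)] ^ α ∫_E |f| ^ q) ^ (1 / q)` is the `L^q` norm of `f` for the measure
`[log (e + 1/s)] ^ α • volume.restrict E`. So the Zygmund norm is a supremum of `L^q` norms over a
family of measures, and such a supremum is complete as soon as the sets null for every member of the
family are the Lebesgue null sets: a fast Cauchy subsequence `f (φ j)` converges almost everywhere
for each measure, and Fatou's lemma, applied to each `L^q` norm separately, bounds the norm of
`f k - g` by the lower limit of those of `f k - f (φ j)`.
-/

open Filter Topology

section eLpNormSup

variable {X E ι : Type*} [MeasurableSpace X] [NormedAddCommGroup E]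
  {p : ℝ≥0∞} {μ : Measure X} {ν : ι → Measure X}

/-- The supremum of the `L^p` seminorms of `f` over a family of measures `ν`. -/
noncomputable def eLpNormSup (f : X → E) (p : ℝ≥0∞) (ν : ι → Measure X) : ℝ≥0∞ :=
  ⨆ i, eLpNorm f p (ν i)

lemma eLpNorm_le_eLpNormSup (f : X → E) (p : ℝ≥0∞) (ν : ι → Measure X) (i : ι) :
    eLpNorm f p (ν i) ≤ eLpNormSup f p ν :=
  le_iSup (fun i => eLpNorm f p (ν i)) i

lemma eLpNormSup_sub_le {f g : X → E} (hf : ∀ i, AEStronglyMeasurable f (ν i))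
    (hg : ∀ i, AEStronglyMeasurable g (ν i)) (hp : 1 ≤ p) :
    eLpNormSup (f - g) p ν ≤ eLpNormSup f p ν + eLpNormSup g p ν :=
  iSup_le fun i => (eLpNorm_sub_le (hf i) (hg i) hp).trans <|
    add_le_add (eLpNorm_le_eLpNormSup f p ν i) (eLpNorm_le_eLpNormSup g p ν i)

lemma eLpNormSup_lim_le_liminf {f : ℕ → X → E} {g : X → E}
    (hf : ∀ k i, AEStronglyMeasurable (f k) (ν i))
    (hlim : ∀ i, ∀ᵐ x ∂ν i, Tendsto (fun k => f k x) atTop (𝓝 (g x))) :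
    eLpNormSup g p ν ≤ liminf (fun k => eLpNormSup (f k) p ν) atTop :=
  iSup_le fun i =>
    (Lp.eLpNorm_lim_le_liminf_eLpNorm (fun k => hf k i) g (hlim i)).trans <|
      liminf_le_liminf <| .of_forall fun k => eLpNorm_le_eLpNormSup (f k) p ν i

lemma eLpNormSup_lt_top_of_tendsto (hp : 1 ≤ p) {f : ℕ → X → E} {g : X → E}
    (hf : ∀ k i, AEStronglyMeasurable (f k) (ν i)) (hg : ∀ i, AEStronglyMeasurable g (ν i))
    (hfin : ∀ k, eLpNormSup (f k) p ν < ∞)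
    (hlim : Tendsto (fun k => eLpNormSup (f k - g) p ν) atTop (𝓝 0)) :
    eLpNormSup g p ν < ∞ := by
  obtain ⟨k, hk⟩ := (hlim.eventually_lt_const zero_lt_top).exists
  calc eLpNormSup g p ν = eLpNormSup (f k - (f k - g)) p ν := by rw [sub_sub_cancel (f k) g]
    _ ≤ eLpNormSup (f k) p ν + eLpNormSup (f k - g) p ν :=
      eLpNormSup_sub_le (hf k) (fun i => (hf k i).sub (hg i)) hp
    _ < ∞ := add_lt_top.2 ⟨hfin k, hk⟩

lemma exists_strictMono_eLpNormSup_sub_lt {f : ℕ → X → E} {B : ℕ → ℝ≥0∞} (hB : ∀ j, 0 < B j)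
    (hcauchy : Tendsto (fun a : ℕ × ℕ => eLpNormSup (f a.1 - f a.2) p ν) atTop (𝓝 0)) :
    ∃ φ : ℕ → ℕ, StrictMono φ ∧
      ∀ N m k, N ≤ m → N ≤ k → eLpNormSup (f (φ m) - f (φ k)) p ν < B N := by
  have tail_small (j : ℕ) :
      ∃ N, ∀ M ≥ N, ∀ m ≥ M, ∀ k ≥ M, eLpNormSup (f m - f k) p ν < B j := by
    obtain ⟨N, hN⟩ := eventually_atTop_prod_self'.1 (hcauchy.eventually_lt_const (hB j))
    exact ⟨N, fun M hM m hm k hk => hN m (hM.trans hm) k (hM.trans hk)⟩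
  obtain ⟨φ, hφ, hφB⟩ := extraction_forall_of_eventually' tail_small
  exact ⟨φ, hφ, fun N m k hm hk => hφB N _ (hφ.monotone hm) _ (hφ.monotone hk)⟩

lemma exists_strictMono_ae_tendsto_of_cauchy_eLpNormSup [CompleteSpace E] (hp : 1 ≤ p)
    {f : ℕ → X → E} (hf : ∀ k i, AEStronglyMeasurable (f k) (ν i))
    (hcauchy : Tendsto (fun a : ℕ × ℕ => eLpNormSup (f a.1 - f a.2) p ν) atTop (𝓝 0)) :
    ∃ φ : ℕ → ℕ, StrictMono φ ∧
      ∀ i, ∀ᵐ x ∂ν i, ∃ l, Tendsto (fun j => f (φ j) x) atTop (𝓝 l) := by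
  obtain ⟨B, hB, hBsum⟩ := exists_pos_sum_of_countable' one_ne_zero ℕ
  obtain ⟨φ, hφ, hφB⟩ := exists_strictMono_eLpNormSup_sub_lt hB hcauchy
  exact ⟨φ, hφ, fun i => Lp.ae_tendsto_of_cauchy_eLpNorm (fun j => hf (φ j) i) hp hBsum.ne_top
    fun N m k hm hk => (eLpNorm_le_eLpNormSup _ p ν i).trans_lt (hφB N m k hm hk)⟩

lemma tendsto_eLpNormSup_sub_of_cauchy {f : ℕ → X → E} {g : X → E} {φ : ℕ → ℕ}
    (hf : ∀ k i, AEStronglyMeasurable (f k) (ν i))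
    (hcauchy : Tendsto (fun a : ℕ × ℕ => eLpNormSup (f a.1 - f a.2) p ν) atTop (𝓝 0))
    (hφ : StrictMono φ)
    (hg : ∀ i, ∀ᵐ x ∂ν i, Tendsto (fun j => f (φ j) x) atTop (𝓝 (g x))) :
    Tendsto (fun k => eLpNormSup (f k - g) p ν) atTop (𝓝 0) := by
  refine ENNReal.tendsto_nhds_zero.2 fun ε hε => ?_
  obtain ⟨N, hN⟩ := eventually_atTop_prod_self'.1 (ENNReal.tendsto_nhds_zero.1 hcauchy ε hε)
  filter_upwards [eventually_ge_atTop N] with k hk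
  calc eLpNormSup (f k - g) p ν
      ≤ liminf (fun j => eLpNormSup (f k - f (φ j)) p ν) atTop :=
        eLpNormSup_lim_le_liminf (fun j i => (hf k i).sub (hf (φ j) i))
          fun i => (hg i).mono fun x hx => hx.const_sub (f k x)
    _ ≤ ε := liminf_le_of_frequently_le' <| Eventually.frequently <|
        (hφ.tendsto_atTop.eventually_ge_atTop N).mono fun j hj => hN k hk (φ j) hj

theorem exists_tendsto_of_cauchy_eLpNormSup [CompleteSpace E] (hp : 1 ≤ p)
    (hν : ae μ = ⨆ i, ae (ν i)) {f : ℕ → X → E} (hf : ∀ k, AEStronglyMeasurable (f k) μ)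
    (hcauchy : Tendsto (fun a : ℕ × ℕ => eLpNormSup (f a.1 - f a.2) p ν) atTop (𝓝 0)) :
    ∃ g, AEStronglyMeasurable g μ ∧
      Tendsto (fun k => eLpNormSup (f k - g) p ν) atTop (𝓝 0) := by
  have ae_iff (P : X → Prop) : (∀ᵐ x ∂μ, P x) ↔ ∀ i, ∀ᵐ x ∂ν i, P x := by
    rw [hν, eventually_iSup]
  have hfν (k : ℕ) (i : ι) : AEStronglyMeasurable (f k) (ν i) :=
    (hf k).mono_ac <| Measure.ae_le_iff_absolutelyContinuous.1 <|
      hν ▸ le_iSup (fun i => ae (ν i)) i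
  obtain ⟨φ, hφ, hφlim⟩ := exists_strictMono_ae_tendsto_of_cauchy_eLpNormSup hp hfν hcauchy
  obtain ⟨g, hg, hgφ⟩ :=
    exists_stronglyMeasurable_limit_of_tendsto_ae (fun j => hf (φ j)) ((ae_iff _).2 hφlim)
  exact ⟨g, hg.aestronglyMeasurable,
    tendsto_eLpNormSup_sub_of_cauchy hfν hcauchy hφ ((ae_iff _).1 hgφ)⟩

end eLpNormSup

lemma eLpNorm_smul_restrict_ofReal {X : Type*} [MeasurableSpace X] {μ : Measure X} {q : ℝ}
    (hq : 0 < q) (c : ℝ≥0∞) (A : Set X) (f : X → ℝ) :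
    eLpNorm f (ENNReal.ofReal q) (c • μ.restrict A) =
      (c * ∫⁻ x in A, ENNReal.ofReal (|f x| ^ q) ∂μ) ^ (1 / q) := by
  have enorm_rpow (x : X) : ‖f x‖ₑ ^ q = ENNReal.ofReal (|f x| ^ q) := by
    rw [Real.enorm_eq_ofReal_abs, ENNReal.ofReal_rpow_of_nonneg (abs_nonneg _) hq.le]
  rw [eLpNorm_eq_lintegral_rpow_enorm_toReal (ofReal_pos.2 hq).ne' ofReal_ne_top,
    toReal_ofReal hq.le, lintegral_smul_measure, smul_eq_mul]
  simp only [enorm_rpow]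

lemma tendsto_zero_of_eventually_lt_ofReal {β : Type*} {l : Filter β} {u : β → ℝ≥0∞}
    (h : ∀ δ > (0 : ℝ), ∀ᶠ b in l, u b < ENNReal.ofReal δ) : Tendsto u l (𝓝 0) := by
  refine ENNReal.tendsto_nhds_zero.2 fun ε hε => ?_
  obtain ⟨δ, hδ, hδε⟩ := ENNReal.lt_iff_exists_nnreal_btwn.1 hε
  filter_upwards [h δ (by exact_mod_cast hδ)] with b hb
  exact (hb.trans_le (ofReal_coe_nnreal.trans_le hδε.le)).le

lemma logFac_pos {s : ℝ} (hs : 0 < s) : 0 < logFac s :=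
  Real.log_pos <| (Real.one_lt_exp_iff.2 one_pos).trans (lt_add_of_pos_right _ (one_div_pos.2 hs))

section Zygmund

variable {n : ℕ} {q : ℝ}

/-- The pairs `(s, A)` with `0 < s` and `A` measurable of Lebesgue measure `s`, over which the
supremum in `zygNorm` is taken. -/
abbrev ZygIndex (n : ℕ) : Type :=
  Σ s : Ioi (0 : ℝ), {A : Set (EuclideanSpace ℝ (Fin n)) //
    MeasurableSet A ∧ volume A = ENNReal.ofReal s.1}

/-- The weight of `zygNorm` at `s`. It sits inside the power `1 / q`, so it is a density of the
measure in `zygMeasure` rather than a factor of the `L^q` norm. -/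
noncomputable def zygWeight (α s : ℝ) : ℝ≥0∞ :=
  ENNReal.ofReal (logFac s) ^ α

/-- The measure whose `L^q` norm is the term of `zygNorm` at `(s, A)`. -/
noncomputable def zygMeasure (α : ℝ) (i : ZygIndex n) : Measure (EuclideanSpace ℝ (Fin n)) :=
  zygWeight α i.1 • volume.restrict i.2.1

lemma zygWeight_ne_zero (α : ℝ) {s : ℝ} (hs : 0 < s) : zygWeight α s ≠ 0 :=
  (ENNReal.rpow_pos (ofReal_pos.2 (logFac_pos hs)) ofReal_ne_top).ne'

lemma zygWeight_ne_top (α : ℝ) {s : ℝ} (hs : 0 < s) : zygWeight α s ≠ ∞ :=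
  rpow_ne_top_of_ne_zero (ofReal_pos.2 (logFac_pos hs)).ne' ofReal_ne_top

lemma zygNorm_eq_eLpNormSup (hq : 0 < q) (α : ℝ) (f : EuclideanSpace ℝ (Fin n) → ℝ) :
    zygNorm n q α f = eLpNormSup f (ENNReal.ofReal q) (zygMeasure α) := by
  have iSup_rpow {κ : Type} (u : κ → ℝ≥0∞) : (⨆ a, u a) ^ (1 / q) = ⨆ a, u a ^ (1 / q) :=
    (orderIsoRpow (1 / q) (one_div_pos.2 hq)).map_iSup u
  simp only [zygNorm, eLpNormSup, zygMeasure, eLpNorm_smul_restrict_ofReal hq, iSup_sigma,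
    ENNReal.mul_iSup, iSup_rpow, zygWeight]

/-- The index of a ball, taken with its own volume as `s`. -/
noncomputable def ballZygIndex (x : EuclideanSpace ℝ (Fin n)) {r : ℝ} (hr : 0 < r) :
    ZygIndex n :=
  ⟨⟨(volume (Metric.ball x r)).toReal,
      toReal_pos (Metric.measure_ball_pos volume x hr).ne' measure_ball_lt_top.ne⟩,
    ⟨Metric.ball x r, measurableSet_ball, (ofReal_toReal measure_ball_lt_top.ne).symm⟩⟩

lemma ae_volume_eq_iSup_ae_zygMeasure (α : ℝ) :
    ae (volume : Measure (EuclideanSpace ℝ (Fin n))) = ⨆ i, ae (zygMeasure (n := n) α i) := by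
  have ae_zygMeasure (i : ZygIndex n) : ae (zygMeasure α i) = ae (volume.restrict i.2.1) :=
    Measure.ae_ennreal_smul_measure_eq (zygWeight_ne_zero α i.1.2) _
  simp only [ae_zygMeasure]
  refine le_antisymm (fun t ht => ?_) (iSup_le fun i => ae_mono Measure.restrict_le_self)
  refine measure_null_of_locally_null _ fun x _ =>
    ⟨tᶜ ∩ Metric.ball x 1,
      inter_mem_nhdsWithin _ (Metric.ball_mem_nhds x one_pos), ?_⟩
  rw [← Measure.restrict_apply' measurableSet_ball]
  exact mem_iSup.1 ht (ballZygIndex x one_pos)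

lemma locallyIntegrable_of_zygNorm_lt_top (hq : 1 ≤ q) {α : ℝ}
    {f : EuclideanSpace ℝ (Fin n) → ℝ} (hf : AEStronglyMeasurable f volume)
    (hfin : zygNorm n q α f < ∞) : LocallyIntegrable f volume := fun x => by
  let i := ballZygIndex x one_pos
  have weight_ne_zero : zygWeight α i.1 ≠ 0 := zygWeight_ne_zero α i.1.2
  have weight_ne_top : zygWeight α i.1 ≠ ∞ := zygWeight_ne_top α i.1.2
  have : IsFiniteMeasure (volume.restrict i.2.1) :=
    isFiniteMeasure_restrict.2 measure_ball_lt_top.ne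
  have : IsFiniteMeasure (zygMeasure α i) := Measure.smul_finite _ weight_ne_top
  rw [zygNorm_eq_eLpNormSup (one_pos.trans_le hq)] at hfin
  have memLp : MemLp f (ENNReal.ofReal q) (zygMeasure α i) :=
    ⟨hf.restrict.smul_measure _, (eLpNorm_le_eLpNormSup f _ _ i).trans_lt hfin⟩
  exact ⟨Metric.ball x 1, Metric.ball_mem_nhds x one_pos,
    (integrable_smul_measure weight_ne_zero weight_ne_top).1 (memLp.integrable (by simpa using hq))⟩

end Zygmund

theorem stmt6_general (n : ℕ) (q α : ℝ) (hq : 1 ≤ q)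
    (f : ℕ → EuclideanSpace ℝ (Fin n) → ℝ)
    (hmeas : ∀ k, AEStronglyMeasurable (f k) volume)
    (hfin : ∀ k, zygNorm n q α (f k) < ⊤)
    (hcauchy : ∀ δ > (0 : ℝ), ∃ N : ℕ, ∀ m ≥ N, ∀ k ≥ N,
      zygNorm n q α (fun x => f m x - f k x) < ENNReal.ofReal δ) :
    ∃ g : EuclideanSpace ℝ (Fin n) → ℝ, LocallyIntegrable g volume ∧
      zygNorm n q α g < ⊤ ∧
      Tendsto (fun k => zygNorm n q α (fun x => f k x - g x)) atTop (𝓝 0) := by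
  have hp : 1 ≤ ENNReal.ofReal q := one_le_ofReal.2 hq
  have norm_eq := zygNorm_eq_eLpNormSup (n := n) (one_pos.trans_le hq) α
  have meas_zyg {g : EuclideanSpace ℝ (Fin n) → ℝ} (hg : AEStronglyMeasurable g volume)
      (i : ZygIndex n) : AEStronglyMeasurable g (zygMeasure α i) := hg.restrict.smul_measure _
  have cauchy : Tendsto (fun a : ℕ × ℕ => zygNorm n q α (f a.1 - f a.2)) atTop (𝓝 0) :=
    tendsto_zero_of_eventually_lt_ofReal fun δ hδ => eventually_atTop_prod_self'.2 (hcauchy δ hδ)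
  simp only [norm_eq] at hfin cauchy
  obtain ⟨g, hg, hlim⟩ :=
    exists_tendsto_of_cauchy_eLpNormSup hp (ae_volume_eq_iSup_ae_zygMeasure α) hmeas cauchy
  have g_fin :=
    eLpNormSup_lt_top_of_tendsto hp (fun k => meas_zyg (hmeas k)) (meas_zyg hg) hfin hlim
  simp only [← norm_eq] at g_fin hlim
  exact ⟨g, locallyIntegrable_of_zygNorm_lt_top hq hg g_fin, g_fin, hlim⟩

theorem stmt6 (n : ℕ) (hn : 1 ≤ n) (q α : ℝ) (hq : 1 ≤ q) (hα : 0 ≤ α)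
    (f : ℕ → EuclideanSpace ℝ (Fin n) → ℝ)
    (hloc : ∀ k, LocallyIntegrable (f k) volume)
    (hfin : ∀ k, zygNorm n q α (f k) < ⊤)
    (hcauchy : ∀ δ > (0 : ℝ), ∃ N : ℕ, ∀ m ≥ N, ∀ k ≥ N,
      zygNorm n q α (fun x => f m x - f k x) < ENNReal.ofReal δ) :
    ∃ g : EuclideanSpace ℝ (Fin n) → ℝ, LocallyIntegrable g volume ∧
      zygNorm n q α g < ⊤ ∧
      Filter.Tendsto (fun k => zygNorm n q α (fun x => f k x - g x))
        Filter.atTop (nhds 0) :=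
  stmt6_general n q α hq f (fun k => (hloc k).aestronglyMeasurable) hfin hcauchy
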